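/- arXiv:1412.4837 — 2 statements merged into one kernel-verified Lean document; each statement's English description precedes it below -/
import Mathlib

section
/- For every n ∈ ℕ, the map Φ̃ sending the ~-class of a recurrent chip configuration c to the ~_s-class of the stabilization (ĉ)° of its restriction ĉ is well defined ((ĉ)° is s-recurrent, and the resulting class does not depend on the chosen representative of the ~-class) and restricts to a bijection from Rec_n(G,~) onto the set {[d̂] ∈ Rec(G,s)/~_s : slvl([d̂]) ≤ n}. -/
open Finset Polynomial

namespace SandpileBM

variable {V E : Type} [Fintype V] [DecidableEq V] [Fintype E] [DecidableEq E]

/-- The number of edges from `v` to `w` in the multigraph given by `src`, `tgt`. -/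
def numEdges (src tgt : E → V) (v w : V) : ℕ :=
  (Finset.univ.filter fun e => src e = v ∧ tgt e = w).card

/-- The out-degree of a vertex. -/
def outdeg (src : E → V) (v : V) : ℕ :=
  (Finset.univ.filter fun e => src e = v).card

/-- The in-degree of a vertex. -/
def indeg (tgt : E → V) (v : V) : ℕ :=
  (Finset.univ.filter fun e => tgt e = v).card

/-- The digraph is strongly connected: any vertex is reachable from any other by
a directed path. -/
def StronglyConnected (src tgt : E → V) : Prop :=
  ∀ v w : V, Relation.ReflTransGen (fun a b => ∃ e : E, src e = a ∧ tgt e = b) v w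

/-- Result of firing the vertex `v` on the chip configuration `c` (sinkless model). -/
def fire (src tgt : E → V) (c : V → ℕ) (v : V) : V → ℕ :=
  fun w => c w + numEdges src tgt v w - (if w = v then outdeg src v else 0)

/-- One legal firing move in the sinkless model. -/
def FireStep (src tgt : E → V) (c d : V → ℕ) : Prop :=
  ∃ v : V, outdeg src v ≤ c v ∧ d = fire src tgt c v

/-- `Reach c d`: `d` is obtained from `c` by a finite sequence of legal firing moves. -/
def Reach (src tgt : E → V) : (V → ℕ) → (V → ℕ) → Prop :=
  Relation.ReflTransGen (FireStep src tgt)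

/-- Stability of a chip configuration. -/
def Stable (src : E → V) (c : V → ℕ) : Prop :=
  ∀ v : V, c v < outdeg src v

/-- A chip configuration is recurrent if it is not stable and every configuration
accessible from it can reach it back. -/
def Recurrent (src tgt : E → V) (c : V → ℕ) : Prop :=
  ¬ Stable src c ∧ ∀ d : V → ℕ, Reach src tgt c d → Reach src tgt d c

/-- Level (total number of chips) of a chip configuration. -/
def lvl (c : V → ℕ) : ℕ := ∑ v : V, c v

/-- Indicator function of the vertex `s`. -/
def deltaS (s : V) : V → ℕ := fun v => if v = s then 1 else 0

/-- Result of firing the vertex `v` on an `s`-configuration. -/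
def sfire (src tgt : E → V) (s : V) (c : {v : V // v ≠ s} → ℕ) (v : {v : V // v ≠ s}) :
    {v : V // v ≠ s} → ℕ :=
  fun w => c w + numEdges src tgt v.1 w.1 - (if w = v then outdeg src v.1 else 0)

/-- One legal s-firing move. -/
def SFireStep (src tgt : E → V) (s : V) (c d : {v : V // v ≠ s} → ℕ) : Prop :=
  ∃ v : {v : V // v ≠ s}, outdeg src v.1 ≤ c v ∧ d = sfire src tgt s c v

/-- `SReach c d`: `d` is obtained from `c` by a finite sequence of legal s-firing moves. -/
def SReach (src tgt : E → V) (s : V) :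
    ({v : V // v ≠ s} → ℕ) → ({v : V // v ≠ s} → ℕ) → Prop :=
  Relation.ReflTransGen (SFireStep src tgt s)

/-- Stability of an `s`-configuration. -/
def SStable (src : E → V) (s : V) (c : {v : V // v ≠ s} → ℕ) : Prop :=
  ∀ v : {v : V // v ≠ s}, c v < outdeg src v.1

/-- The stabilization `c°` of an `s`-configuration: the (for strongly connected digraphs,
unique) stable `s`-configuration reachable from `c` by legal s-firing moves. -/
noncomputable def stab (src tgt : E → V) (s : V) (c : {v : V // v ≠ s} → ℕ) :
    {v : V // v ≠ s} → ℕ :=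
  Classical.epsilon fun d => SReach src tgt s c d ∧ SStable src s d

/-- An `s`-configuration `c` is s-recurrent if every `s`-configuration can be completed
to one whose stabilization is `c`. -/
def SRecurrent (src tgt : E → V) (s : V) (c : {v : V // v ≠ s} → ℕ) : Prop :=
  ∀ c₁ : {v : V // v ≠ s} → ℕ, ∃ c₂ : {v : V // v ≠ s} → ℕ,
    stab src tgt s (c₁ + c₂) = c

/-- `β_s`, recording the number of edges from `s` to each other vertex. -/
def betaS (src tgt : E → V) (s : V) : {v : V // v ≠ s} → ℕ :=
  fun v => numEdges src tgt s v.1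

/-- The relation `~_s` on s-recurrent configurations: `d = (c + k·β_s)°` for some `k`. -/
def SEquiv (src tgt : E → V) (s : V) (c d : {v : V // v ≠ s} → ℕ) : Prop :=
  ∃ k : ℕ, stab src tgt s (c + k • betaS src tgt s) = d

/-- Restriction of a chip configuration to `V ∖ {s}`. -/
def restrictS (s : V) (c : V → ℕ) : {v : V // v ≠ s} → ℕ := fun v => c v.1

/-- Extension `c̄` of an `s`-configuration by `0` at `s`. -/
def extendS (s : V) (c : {v : V // v ≠ s} → ℕ) : V → ℕ :=
  fun v => if h : v = s then 0 else c ⟨v, h⟩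

/-- The s-index `χ(c)`: the least `k` such that `c̄ + k·δ_s` is recurrent. -/
noncomputable def sIndex (src tgt : E → V) (s : V) (c : {v : V // v ≠ s} → ℕ) : ℕ :=
  sInf {k : ℕ | Recurrent src tgt (extendS s c + k • deltaS s)}

/-- `φ(c) := c̄ + χ(c)·δ_s`. -/
noncomputable def phi (src tgt : E → V) (s : V) (c : {v : V // v ≠ s} → ℕ) : V → ℕ :=
  extendS s c + sIndex src tgt s c • deltaS s

/-- The s-level `slvl(c) := χ(c) + Σ_{v ≠ s} c(v)`. -/
noncomputable def slvl (src tgt : E → V) (s : V) (c : {v : V // v ≠ s} → ℕ) : ℕ :=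
  sIndex src tgt s c + ∑ v : {v : V // v ≠ s}, c v

/-- The d-level `dlvl(c) := deg⁺(s) + Σ_{v ≠ s} c(v)`. -/
def dlvl (src : E → V) (s : V) (c : {v : V // v ≠ s} → ℕ) : ℕ :=
  outdeg src s + ∑ v : {v : V // v ≠ s}, c v

/-- The set (as a type) of recurrent chip configurations. -/
abbrev RecL (src tgt : E → V) := {c : V → ℕ // Recurrent src tgt c}

/-- The setoid on recurrent configurations generated by the relation `~` (i.e. `⤳`). -/
def recLSetoid (src tgt : E → V) : Setoid (RecL src tgt) :=
  Relation.EqvGen.setoid fun a b => Reach src tgt a.1 b.1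

/-- The set of `~`-classes of recurrent configurations. -/
abbrev RecLQuot (src tgt : E → V) := Quotient (recLSetoid src tgt)

/-- The set (as a type) of s-recurrent configurations. -/
abbrev RecS (src tgt : E → V) (s : V) := {c : {v : V // v ≠ s} → ℕ // SRecurrent src tgt s c}

/-- The setoid on s-recurrent configurations generated by the relation `~_s`. -/
def recSSetoid (src tgt : E → V) (s : V) : Setoid (RecS src tgt s) :=
  Relation.EqvGen.setoid fun a b => SEquiv src tgt s a.1 b.1

/-- The set of `~_s`-classes of s-recurrent configurations. -/
abbrev RecSQuot (src tgt : E → V) (s : V) := Quotient (recSSetoid src tgt s)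

/-- The level of a `~`-class of recurrent configurations (level is constant on classes). -/
noncomputable def lvlClass (src tgt : E → V) (q : RecLQuot src tgt) : ℕ :=
  sSup ((fun c : RecL src tgt => lvl c.1) '' {c | Quotient.mk (recLSetoid src tgt) c = q})

/-- The s-level of a `~_s`-class (s-level is constant on classes). -/
noncomputable def slvlClass (src tgt : E → V) (s : V) (q : RecSQuot src tgt s) : ℕ :=
  sSup ((fun c : RecS src tgt s => slvl src tgt s c.1) ''
    {c | Quotient.mk (recSSetoid src tgt s) c = q})

/-- The d-level of a `~_s`-class: the maximum d-level over the class. -/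
noncomputable def dlvlClass (src tgt : E → V) (s : V) (q : RecSQuot src tgt s) : ℕ :=
  sSup ((fun c : RecS src tgt s => dlvl src s c.1) ''
    {c | Quotient.mk (recSSetoid src tgt s) c = q})

/-- The Biggs–Merino polynomial `B(G,s;y) = Σ_{[c] ∈ Rec(G,s)/~_s} y^{dlvl([c])}`. -/
noncomputable def BM (src tgt : E → V) (s : V) : Polynomial ℤ :=
  ∑ᶠ q : RecSQuot src tgt s, X ^ dlvlClass src tgt s q

/-- `LegalSeq l c d`: firing the vertices in the list `l` in order is a sequence of
legal firing moves transforming `c` into `d` (sinkless model). -/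
def LegalSeq (src tgt : E → V) : List V → (V → ℕ) → (V → ℕ) → Prop
  | [], c, d => d = c
  | v :: l, c, d => outdeg src v ≤ c v ∧ LegalSeq src tgt l (fire src tgt c v) d

/-- `SLegalSeq l c d`: firing the vertices in the list `l` in order is a sequence of
legal s-firing moves transforming `c` into `d`. -/
def SLegalSeq (src tgt : E → V) (s : V) :
    List {v : V // v ≠ s} → ({v : V // v ≠ s} → ℕ) → ({v : V // v ≠ s} → ℕ) → Prop
  | [], c, d => d = c
  | v :: l, c, d => outdeg src v.1 ≤ c v ∧ SLegalSeq src tgt s l (sfire src tgt s c v) d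

/-- The configuration obtained from `c` after firing the vertices of `l` in order. -/
def iterFire (src tgt : E → V) (c : V → ℕ) (l : List V) : V → ℕ :=
  l.foldl (fire src tgt) c

/-- The Laplacian of the digraph applied to an integer vector:
`(Δq)(v) = deg⁺(v)·q(v) − Σ_w A(w,v)·q(w)`. -/
def lapApply (src tgt : E → V) (q : V → ℤ) : V → ℤ :=
  fun v => (outdeg src v : ℤ) * q v - ∑ w : V, (numEdges src tgt w v : ℤ) * q w

/-- `r` is the primitive period vector of the digraph: it has positive entries with
gcd `1`, lies in the kernel of the Laplacian, and generates this kernel. -/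
def IsPeriodVector (src tgt : E → V) (r : V → ℕ) : Prop :=
  (∀ v : V, 0 < r v) ∧ Finset.univ.gcd r = 1 ∧
    lapApply src tgt (fun v => (r v : ℤ)) = 0 ∧
    ∀ q : V → ℤ, lapApply src tgt q = 0 → ∃ k : ℤ, q = k • fun v => (r v : ℤ)

/-- The Laplacian matrix of the digraph. -/
def lapMatrix (src tgt : E → V) : Matrix V V ℤ :=
  Matrix.of fun v w =>
    if v = w then (outdeg src v : ℤ) - numEdges src tgt v v
    else -(numEdges src tgt w v : ℤ)

/-- The determinant of the reduced Laplacian obtained by deleting the row and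
column indexed by `v`. -/
def reducedLapDet (src tgt : E → V) (v : V) : ℤ :=
  (((lapMatrix src tgt).submatrix (fun a : {w : V // w ≠ v} => a.1)
    (fun a : {w : V // w ≠ v} => a.1)).det)

/-- The period constant `α := gcd_{v ∈ V} det Δ_v`. -/
def periodConstant (src tgt : E → V) : ℤ :=
  Finset.univ.gcd (reducedLapDet src tgt)

/-- `IsWalk l a b`: the list of edges `l` forms a directed walk from `a` to `b`. -/
def IsWalk (src tgt : E → V) : List E → V → V → Prop
  | [], a, b => a = b
  | e :: l, a, b => src e = a ∧ IsWalk src tgt l (tgt e) b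

/-- `IsPath l a b`: the list of edges `l` forms a directed path from `a` to `b`:
all visited vertices are distinct (except that the final vertex is allowed to
coincide with the starting vertex). -/
def IsPath (src tgt : E → V) (l : List E) (a b : V) : Prop :=
  IsWalk src tgt l a b ∧ (l.map tgt).Nodup ∧ a ∉ (l.map tgt).dropLast

/-- `T` is an arborescence rooted at `s`: for every vertex `v` there is a unique
directed path from `s` to `v` using only edges of `T`. -/
def IsArborescence (src tgt : E → V) (s : V) (T : Finset E) : Prop :=
  ∀ v : V, ∃! l : List E, (∀ e ∈ l, e ∈ T) ∧ IsPath src tgt l s v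

/-- The edge `e ∉ T` is externally active for the arborescence `T` (w.r.t. the linear
order on `E`): where `P₁`, `P₂` are the two edge-disjoint directed paths in `T ∪ {e}`
sharing their starting vertex and ending at `tgt e`, with `e ∈ P₁`, the smallest edge
on `P₁ ++ P₂` lies on `P₁`. -/
def ExtActive [LinearOrder E] (src tgt : E → V) (T : Finset E) (e : E) : Prop :=
  e ∉ T ∧ ∃ (u : V) (p₁ p₂ : List E),
    (∀ f ∈ p₁, f ∈ T ∨ f = e) ∧ (∀ f ∈ p₂, f ∈ T ∨ f = e) ∧
    IsPath src tgt p₁ u (tgt e) ∧ IsPath src tgt p₂ u (tgt e) ∧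
    e ∈ p₁ ∧ (∀ f ∈ p₁, f ∉ p₂) ∧
    ∃ fmin ∈ p₁, ∀ f ∈ p₁ ++ p₂, fmin ≤ f

/-- The external activity `e(T)` of an arborescence `T`. -/
noncomputable def extActivity [LinearOrder E] (src tgt : E → V) (T : Finset E) : ℕ :=
  Nat.card {e : E // ExtActive src tgt T e}

/-- The greedoid Tutte polynomial `T(G,s;y) = Σ_{T ∈ A(G,s)} y^{e(T)}`. -/
noncomputable def greedoidTutte [LinearOrder E] (src tgt : E → V) (s : V) : Polynomial ℤ :=
  ∑ᶠ T : {T : Finset E // IsArborescence src tgt s T}, X ^ extActivity src tgt T.1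

/-- `f` is a `G^r`-parking function rooted at `s`. -/
def IsParking (src tgt : E → V) (s : V) (f : {v : V // v ≠ s} → ℕ) : Prop :=
  ∀ A : Finset {v : V // v ≠ s}, A.Nonempty →
    ∃ v ∈ A, f v < Nat.card {e : E // (∀ w ∈ A, src e ≠ w.1) ∧ tgt e = v.1}

/-- The d-level of a `G^r`-parking function: `|E| − |V| + 1 − Σ_{v≠s} f(v)`. -/
noncomputable def parkDlvl (src : E → V) (s : V) (f : {v : V // v ≠ s} → ℕ) : ℕ :=
  ((Fintype.card E : ℤ) - Fintype.card V + 1 - ∑ v : {v : V // v ≠ s}, (f v : ℤ)).toNat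

/-- `σ` is an s-decreasing traversal: a sequence in which every vertex and edge of `G`
appears exactly once, satisfying (R1) every vertex other than `s` is immediately
preceded by an edge targeting it, and (R2) every edge is the `<ₑ`-maximum edge not yet
seen whose source has been seen. -/
def IsTraversal [LinearOrder E] (src tgt : E → V) (s : V) (σ : List (V ⊕ E)) : Prop :=
  σ.Nodup ∧ (∀ x : V ⊕ E, x ∈ σ) ∧
  (∀ (i : ℕ) (hi : i < σ.length) (v : V),
      σ.get ⟨i, hi⟩ = Sum.inl v → v ≠ s →
      0 < i ∧ ∃ e : E, tgt e = v ∧ σ.get ⟨i - 1, by omega⟩ = Sum.inr e) ∧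
  (∀ (i : ℕ) (hi : i < σ.length) (e : E),
      σ.get ⟨i, hi⟩ = Sum.inr e →
      Sum.inl (src e) ∈ σ.take i ∧
      ∀ f : E, Sum.inr f ∉ σ.take i → Sum.inl (src f) ∈ σ.take i → f ≤ e)

open scoped Classical in
/-- `Υ(σ)`: the set of edges immediately preceding a non-sink vertex in `σ`. -/
noncomputable def Upsilon (src tgt : E → V) (s : V) (σ : List (V ⊕ E)) : Finset E :=
  Finset.univ.filter fun e =>
    ∃ (i : ℕ) (hi : i < σ.length) (v : V), v ≠ s ∧ σ.get ⟨i, hi⟩ = Sum.inl v ∧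
      0 < i ∧ ∃ hj : i - 1 < σ.length, σ.get ⟨i - 1, hj⟩ = Sum.inr e

/-- The strength of `σ`: the number of strong edges, i.e. edges whose target appears
before them in `σ`. -/
noncomputable def strength (tgt : E → V) (σ : List (V ⊕ E)) : ℕ :=
  Nat.card {e : E // ∃ (i : ℕ) (hi : i < σ.length),
    σ.get ⟨i, hi⟩ = Sum.inr e ∧ Sum.inl (tgt e) ∈ σ.take i}

/-- `Ψ(σ)(v)`: one less than the number of edges targeting `v` that appear before the
vertex `v` in `σ`. -/
def Psi (tgt : E → V) (s : V) (σ : List (V ⊕ E)) : {v : V // v ≠ s} → ℕ :=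
  fun v =>
    (((σ.takeWhile fun x => x ≠ Sum.inl v.1).filterMap Sum.getRight?).filter
      fun e => tgt e = v.1).length - 1

/-!
On a strongly connected digraph a configuration is recurrent iff some nonempty legal firing
sequence returns to it, and such a sequence must fire every vertex. Restricting to `V ∖ {s}`
turns each firing of `s` into an addition of `β_s`, which by commutativity of firings may be
done in advance; hence `c ⤳ d` gives `ĉ + k • β_s ⤳_s d̂`, where `k` counts the firings of `s`.
Conversely `s`-firings lift to firings, and a recurrent configuration can fire `s` as often as
desired, so adding `k • β_s` and stabilizing can be realized by a firing sequence from `c`. As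
a configuration is determined by its restriction and its level, this makes `Φ̃` injective on
each level. Adding chips preserves recurrence, so an `s`-recurrent `d̂` extends to recurrent
configurations of exactly the levels `n ≥ slvl d̂`.
-/

section

omit [Fintype V] [DecidableEq E]

variable {src tgt : E → V}

lemma fire_apply_add {c : V → ℕ} {v : V} (hv : outdeg src v ≤ c v) (w : V) :
    fire src tgt c v w + (if w = v then outdeg src v else 0) = c w + numEdges src tgt v w := by
  unfold fire
  split_ifs with hw
  · subst hw; omega
  · omega

lemma numEdges_le_fire {c : V → ℕ} {v : V} (hv : outdeg src v ≤ c v) (w : V) :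
    numEdges src tgt v w ≤ fire src tgt c v w := by
  have hfire := fire_apply_add (tgt := tgt) hv w
  split_ifs at hfire with hw
  · subst hw; omega
  · omega

lemma le_fire_of_ne (c : V → ℕ) {v w : V} (hwv : w ≠ v) : c w ≤ fire src tgt c v w := by
  simp [fire, hwv]

lemma fire_comm {c : V → ℕ} {v w : V} (hv : outdeg src v ≤ c v) (hw : outdeg src w ≤ c w) :
    fire src tgt (fire src tgt c v) w = fire src tgt (fire src tgt c w) v := by
  rcases eq_or_ne v w with rfl | hvw
  · rfl
  funext x
  have hcv := fire_apply_add (tgt := tgt) hv x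
  have hcw := fire_apply_add (tgt := tgt) hw x
  have hcvw := fire_apply_add (c := fire src tgt c v) (tgt := tgt)
    (hw.trans (le_fire_of_ne c hvw.symm)) x
  have hcwv := fire_apply_add (c := fire src tgt c w) (tgt := tgt)
    (hv.trans (le_fire_of_ne c hvw)) x
  omega

lemma fire_add {c : V → ℕ} {v : V} (hv : outdeg src v ≤ c v) (x : V → ℕ) :
    fire src tgt (c + x) v = fire src tgt c v + x := by
  funext w
  simp only [fire, Pi.add_apply]
  split_ifs with hw
  · subst hw; omega
  · omega

lemma numEdges_pos (e : E) : 0 < numEdges src tgt (src e) (tgt e) :=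
  Finset.card_pos.2 ⟨e, by simp⟩

lemma exists_outdeg_le_of_not_stable {c : V → ℕ} (hc : ¬ Stable src c) :
    ∃ v, outdeg src v ≤ c v := by
  simpa [Stable] using hc

lemma legalSeq_append {l₁ l₂ : List V} {c d : V → ℕ} :
    LegalSeq src tgt (l₁ ++ l₂) c d ↔
      ∃ e, LegalSeq src tgt l₁ c e ∧ LegalSeq src tgt l₂ e d := by
  induction l₁ generalizing c with
  | nil => simp [LegalSeq]
  | cons v l₁ ih => simp [LegalSeq, ih, and_assoc]

lemma LegalSeq.reach {l : List V} {c d : V → ℕ} (h : LegalSeq src tgt l c d) :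
    Reach src tgt c d := by
  induction l generalizing c with
  | nil => exact h ▸ .refl
  | cons v l ih => exact .head ⟨v, h.1, rfl⟩ (ih h.2)

lemma Reach.exists_legalSeq {c d : V → ℕ} (h : Reach src tgt c d) :
    ∃ l, LegalSeq src tgt l c d := by
  induction h using Relation.ReflTransGen.head_induction_on with
  | refl => exact ⟨[], rfl⟩
  | head hstep _ ih =>
    obtain ⟨v, hv, rfl⟩ := hstep
    obtain ⟨l, hl⟩ := ih
    exact ⟨v :: l, hv, hl⟩

lemma LegalSeq.add_right {l : List V} {c d : V → ℕ} (h : LegalSeq src tgt l c d)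
    (x : V → ℕ) : LegalSeq src tgt l (c + x) (d + x) := by
  induction l generalizing c with
  | nil => exact congrArg (· + x) h
  | cons v l ih =>
    exact ⟨h.1.trans (Nat.le_add_right _ _), fire_add h.1 x ▸ ih h.2⟩

lemma Reach.add_right {c d : V → ℕ} (h : Reach src tgt c d) (x : V → ℕ) :
    Reach src tgt (c + x) (d + x) := by
  obtain ⟨l, hl⟩ := h.exists_legalSeq
  exact (hl.add_right x).reach

lemma Reach.add {c d c' d' : V → ℕ} (h : Reach src tgt c d) (h' : Reach src tgt c' d') :
    Reach src tgt (c + c') (d + d') := by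
  have hd := h'.add_right d
  rw [add_comm c', add_comm d'] at hd
  exact (h.add_right c').trans hd

lemma LegalSeq.apply_add_count_mul {l : List V} {c d : V → ℕ} (h : LegalSeq src tgt l c d)
    (w : V) :
    d w + l.count w * outdeg src w = c w + (l.map fun v => numEdges src tgt v w).sum := by
  induction l generalizing c with
  | nil => simp [show d = c from h]
  | cons v l ih =>
    have hfire := fire_apply_add (tgt := tgt) h.1 w
    have hl := ih h.2
    rw [List.map_cons, List.sum_cons]
    rcases eq_or_ne w v with rfl | hwv
    · rw [List.count_cons_self, add_one_mul]
      simp only [if_true] at hfire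
      omega
    · rw [List.count_cons_of_ne hwv.symm]
      simp only [hwv, if_false] at hfire
      omega

lemma LegalSeq.tgt_mem_of_src_mem {l : List V} {c : V → ℕ} (h : LegalSeq src tgt l c c) {e : E}
    (he : src e ∈ l) : tgt e ∈ l := by
  by_contra htgt
  have hsum : (l.map fun v => numEdges src tgt v (tgt e)).sum = 0 := by
    simpa [List.count_eq_zero.2 htgt] using h.apply_add_count_mul (tgt e)
  exact (numEdges_pos (tgt := tgt) e).ne'
    (List.sum_eq_zero_iff.1 hsum _ (List.mem_map_of_mem he))

lemma LegalSeq.mem_of_ne_nil (hG : StronglyConnected src tgt) {l : List V} {c : V → ℕ}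
    (h : LegalSeq src tgt l c c) (hl : l ≠ []) (w : V) : w ∈ l := by
  obtain ⟨v, hv⟩ := List.exists_mem_of_ne_nil l hl
  induction hG v w with
  | refl => exact hv
  | tail _ hedge ih =>
    obtain ⟨e, rfl, rfl⟩ := hedge
    exact h.tgt_mem_of_src_mem ih

-- The abelian property: a vertex that is ready to fire may fire now instead of at its first turn.
lemma LegalSeq.erase {l : List V} {c d : V → ℕ} (h : LegalSeq src tgt l c d) {v : V}
    (hv : outdeg src v ≤ c v) (hmem : v ∈ l) :
    LegalSeq src tgt (l.erase v) (fire src tgt c v) d := by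
  induction l generalizing c with
  | nil => simp at hmem
  | cons w l ih =>
    obtain ⟨hw, hl⟩ := h
    rcases eq_or_ne w v with rfl | hwv
    · simpa using hl
    · rw [List.erase_cons_tail (by simpa using hwv)]
      refine ⟨hw.trans (le_fire_of_ne c hwv), ?_⟩
      rw [fire_comm hv hw]
      exact ih hl (hv.trans (le_fire_of_ne c hwv.symm))
        ((List.mem_cons.1 hmem).resolve_left hwv.symm)

/-- A configuration is periodic if some nonempty legal firing sequence returns to it; this is the
existential form of recurrence on strongly connected digraphs. -/
def IsPeriodic (src tgt : E → V) (c : V → ℕ) : Prop :=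
  ∃ l ≠ [], LegalSeq src tgt l c c

lemma isPeriodic_of_transGen {c : V → ℕ} (h : Relation.TransGen (FireStep src tgt) c c) :
    IsPeriodic src tgt c := by
  obtain ⟨_, ⟨v, hv, rfl⟩, hback⟩ := Relation.TransGen.head'_iff.1 h
  obtain ⟨l, hl⟩ := Reach.exists_legalSeq hback
  exact ⟨v :: l, List.cons_ne_nil v l, hv, hl⟩

lemma IsPeriodic.not_stable {c : V → ℕ} (h : IsPeriodic src tgt c) : ¬ Stable src c := by
  obtain ⟨l, hl, hloop⟩ := h
  obtain ⟨v, l, rfl⟩ := List.exists_cons_of_ne_nil hl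
  exact fun hstable => (hstable v).not_ge hloop.1

lemma IsPeriodic.reach_of_fireStep (hG : StronglyConnected src tgt) {c d : V → ℕ}
    (h : IsPeriodic src tgt c) (hcd : FireStep src tgt c d) : Reach src tgt d c := by
  obtain ⟨v, hv, rfl⟩ := hcd
  obtain ⟨l, hl, hloop⟩ := h
  exact (hloop.erase hv (hloop.mem_of_ne_nil hG hl v)).reach

lemma IsPeriodic.reach (hG : StronglyConnected src tgt) {c d : V → ℕ}
    (h : IsPeriodic src tgt c) (hcd : Reach src tgt c d) :
    IsPeriodic src tgt d ∧ Reach src tgt d c := by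
  induction hcd with
  | refl => exact ⟨h, .refl⟩
  | tail _ hstep ih =>
    have hback : Reach src tgt _ _ := ih.1.reach_of_fireStep hG hstep
    exact ⟨isPeriodic_of_transGen (.tail' hback hstep), hback.trans ih.2⟩

theorem recurrent_iff_isPeriodic (hG : StronglyConnected src tgt) {c : V → ℕ} :
    Recurrent src tgt c ↔ IsPeriodic src tgt c := by
  refine ⟨fun ⟨hunstable, hback⟩ => ?_, fun h => ⟨h.not_stable, fun d hcd => (h.reach hG hcd).2⟩⟩
  obtain ⟨v, hv⟩ := exists_outdeg_le_of_not_stable hunstable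
  have hstep : FireStep src tgt c (fire src tgt c v) := ⟨v, hv, rfl⟩
  exact isPeriodic_of_transGen (.head' hstep (hback _ (.single hstep)))

lemma Recurrent.of_reach (hG : StronglyConnected src tgt) {c d : V → ℕ}
    (h : Recurrent src tgt c) (hcd : Reach src tgt c d) : Recurrent src tgt d :=
  (recurrent_iff_isPeriodic hG).2 (((recurrent_iff_isPeriodic hG).1 h).reach hG hcd).1

lemma Recurrent.add_right (hG : StronglyConnected src tgt) {c : V → ℕ}
    (h : Recurrent src tgt c) (x : V → ℕ) : Recurrent src tgt (c + x) := by
  rw [recurrent_iff_isPeriodic hG] at h ⊢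
  obtain ⟨l, hl, hloop⟩ := h
  exact ⟨l, hl, hloop.add_right x⟩

lemma equivalence_reach (src tgt : E → V) :
    Equivalence fun c d : RecL src tgt => Reach src tgt c d where
  refl _ := .refl
  symm {c _} hcd := c.2.2 _ hcd
  trans := .trans

lemma recLSetoid_r_iff {c d : RecL src tgt} :
    (recLSetoid src tgt).r c d ↔ Reach src tgt c d :=
  (equivalence_reach src tgt).eqvGen_iff

end

section

omit [Fintype V] [DecidableEq E]

variable {src tgt : E → V} {s : V}

lemma restrictS_extendS_add (a : {v : V // v ≠ s} → ℕ) (k : ℕ) :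
    restrictS s (extendS s a + k • deltaS s) = a := by
  funext v
  simp [restrictS, extendS, deltaS, v.2]

omit [DecidableEq V] in
lemma restrictS_add (c d : V → ℕ) : restrictS s (c + d) = restrictS s c + restrictS s d := rfl

lemma restrictS_nsmul_deltaS (k : ℕ) : restrictS s (k • deltaS s) = 0 := by
  funext v
  simp [restrictS, deltaS, v.2]

lemma restrictS_extendS (a : {v : V // v ≠ s} → ℕ) : restrictS s (extendS s a) = a := by
  simpa using restrictS_extendS_add a 0

lemma extendS_restrictS_add (s : V) (c : V → ℕ) :
    extendS s (restrictS s c) + c s • deltaS s = c := by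
  funext v
  by_cases hv : v = s <;> simp [extendS, restrictS, deltaS, hv]

lemma restrictS_phi (a : {v : V // v ≠ s} → ℕ) : restrictS s (phi src tgt s a) = a :=
  restrictS_extendS_add a _

lemma restrictS_fire (c : V → ℕ) (v : {v : V // v ≠ s}) :
    restrictS s (fire src tgt c v) = sfire src tgt s (restrictS s c) v := by
  funext w
  simp [restrictS, fire, sfire, Subtype.ext_iff]

lemma restrictS_fire_self (c : V → ℕ) :
    restrictS s (fire src tgt c s) = restrictS s c + betaS src tgt s := by
  funext w
  simp [restrictS, fire, betaS, w.2]

lemma sfire_add {a : {v : V // v ≠ s} → ℕ} {v : {v : V // v ≠ s}} (hv : outdeg src v ≤ a v)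
    (x : {v : V // v ≠ s} → ℕ) :
    sfire src tgt s (a + x) v = sfire src tgt s a v + x := by
  have hv' : outdeg src v ≤ extendS s a v := by simpa [extendS, v.2] using hv
  have h := congrArg (restrictS s) (fire_add (tgt := tgt) hv' (extendS s x))
  simpa [restrictS_fire, restrictS_add, restrictS_extendS] using h

lemma SReach.refl (a : {v : V // v ≠ s} → ℕ) : SReach src tgt s a a :=
  Relation.ReflTransGen.refl

lemma SReach.add_right {a b : {v : V // v ≠ s} → ℕ} (h : SReach src tgt s a b)
    (x : {v : V // v ≠ s} → ℕ) : SReach src tgt s (a + x) (b + x) := by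
  induction h with
  | refl => exact .refl _
  | tail _ hstep ih =>
    obtain ⟨v, hv, rfl⟩ := hstep
    exact ih.tail ⟨v, hv.trans (Nat.le_add_right _ _), (sfire_add hv x).symm⟩

lemma LegalSeq.sReach {l : List V} {c d : V → ℕ} (h : LegalSeq src tgt l c d) (s : V) :
    SReach src tgt s (restrictS s c + l.count s • betaS src tgt s) (restrictS s d) := by
  induction l generalizing c with
  | nil =>
    obtain rfl : d = c := h
    simpa using SReach.refl (src := src) (tgt := tgt) (restrictS s d)
  | cons v l ih =>
    obtain ⟨hv, hl⟩ := h
    by_cases hvs : v = s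
    · subst hvs
      simpa only [restrictS_fire_self, List.count_cons_self, succ_nsmul', add_assoc] using ih hl
    · rw [List.count_cons_of_ne hvs]
      refine .head ⟨⟨v, hvs⟩, hv.trans (Nat.le_add_right _ _), rfl⟩ ?_
      rw [sfire_add hv, ← restrictS_fire]
      exact ih hl

lemma Reach.sReach {c d : V → ℕ} (h : Reach src tgt c d) (s : V) :
    ∃ k : ℕ, SReach src tgt s (restrictS s c + k • betaS src tgt s) (restrictS s d) := by
  obtain ⟨l, hl⟩ := h.exists_legalSeq
  exact ⟨l.count s, hl.sReach s⟩

lemma SReach.exists_legalSeq {a b : {v : V // v ≠ s} → ℕ} (h : SReach src tgt s a b) {c : V → ℕ}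
    (hc : restrictS s c = a) :
    ∃ l d, LegalSeq src tgt l c d ∧ s ∉ l ∧ restrictS s d = b := by
  induction h using Relation.ReflTransGen.head_induction_on generalizing c with
  | refl => exact ⟨[], c, rfl, List.not_mem_nil, hc⟩
  | head hstep _ ih =>
    obtain ⟨v, hv, rfl⟩ := hstep
    subst hc
    obtain ⟨l, d, hl, hs, hd⟩ := ih (restrictS_fire c v)
    exact ⟨v :: l, d, ⟨hv, hl⟩, List.not_mem_cons_of_ne_of_not_mem v.2.symm hs, hd⟩

lemma SReach.exists_reach {c : V → ℕ} {b : {v : V // v ≠ s} → ℕ}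
    (h : SReach src tgt s (restrictS s c) b) : ∃ d, Reach src tgt c d ∧ restrictS s d = b := by
  obtain ⟨l, d, hl, _, hd⟩ := h.exists_legalSeq rfl
  exact ⟨d, hl.reach, hd⟩

lemma exists_legalSeq_of_transGen_sFireStep {c : V → ℕ} {b : {v : V // v ≠ s} → ℕ}
    (h : Relation.TransGen (SFireStep src tgt s) (restrictS s c) b) :
    ∃ l d, l ≠ [] ∧ LegalSeq src tgt l c d ∧ s ∉ l ∧ restrictS s d = b := by
  obtain ⟨_, ⟨v, hv, rfl⟩, hreach⟩ := Relation.TransGen.head'_iff.1 h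
  obtain ⟨l, d, hl, hs, hd⟩ := SReach.exists_legalSeq hreach (restrictS_fire c v)
  exact ⟨v :: l, d, List.cons_ne_nil _ _, ⟨hv, hl⟩,
    List.not_mem_cons_of_ne_of_not_mem v.2.symm hs, hd⟩

lemma SFireStep.diamond {a b c : {v : V // v ≠ s} → ℕ} (hb : SFireStep src tgt s a b)
    (hc : SFireStep src tgt s a c) :
    ∃ d, Relation.ReflGen (SFireStep src tgt s) b d ∧ SReach src tgt s c d := by
  obtain ⟨v, hv, rfl⟩ := hb
  obtain ⟨w, hw, rfl⟩ := hc
  rcases eq_or_ne v w with rfl | hvw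
  · exact ⟨_, .refl, .refl _⟩
  have hvw' : v.1 ≠ w := Subtype.coe_ne_coe.2 hvw
  rw [← restrictS_extendS a] at hv hw ⊢
  set c := extendS s a
  simp only [← restrictS_fire]
  refine ⟨_, .single ⟨w, hw.trans (le_fire_of_ne c hvw'.symm), rfl⟩,
    .single ⟨v, hv.trans (le_fire_of_ne c hvw'), ?_⟩⟩
  rw [← restrictS_fire, ← restrictS_fire, fire_comm hv hw]

lemma SStable.eq_of_sReach {a b : {v : V // v ≠ s} → ℕ} (ha : SStable src s a)
    (h : SReach src tgt s a b) : b = a := by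
  rcases Relation.ReflTransGen.cases_head h with rfl | ⟨_, ⟨v, hv, -⟩, -⟩
  · rfl
  · exact absurd hv (ha v).not_ge

theorem SReach.eq_of_sStable {a b c : {v : V // v ≠ s} → ℕ} (hb : SReach src tgt s a b)
    (hbs : SStable src s b) (hc : SReach src tgt s a c) (hcs : SStable src s c) : b = c := by
  obtain ⟨d, hbd, hcd⟩ := Relation.church_rosser (fun _ _ _ => SFireStep.diamond) hb hc
  rw [← hbs.eq_of_sReach hbd, hcs.eq_of_sReach hcd]

lemma Recurrent.exists_reach_sReach_add_betaS (hG : StronglyConnected src tgt) {c : V → ℕ}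
    (h : Recurrent src tgt c) (s : V) :
    ∃ d, Reach src tgt c d ∧
      SReach src tgt s (restrictS s c + betaS src tgt s) (restrictS s d) := by
  -- Follow a loop at `c` until `s` has fired exactly once.
  obtain ⟨l, hl, hloop⟩ := (recurrent_iff_isPeriodic hG).1 h
  obtain ⟨l₁, l₂, rfl, hs⟩ := List.eq_append_cons_of_mem (hloop.mem_of_ne_nil hG hl s)
  rw [List.append_cons] at hloop
  obtain ⟨d, hd, -⟩ := legalSeq_append.1 hloop
  refine ⟨d, hd.reach, ?_⟩
  simpa [List.count_eq_zero.2 hs] using hd.sReach s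

lemma Recurrent.exists_reach_sReach_add_nsmul_betaS (hG : StronglyConnected src tgt) {c : V → ℕ}
    (h : Recurrent src tgt c) (s : V) (k : ℕ) :
    ∃ d, Reach src tgt c d ∧
      SReach src tgt s (restrictS s c + k • betaS src tgt s) (restrictS s d) := by
  induction k with
  | zero => exact ⟨c, .refl, by simpa using SReach.refl (src := src) (tgt := tgt) (restrictS s c)⟩
  | succ k ih =>
    obtain ⟨d, hcd, hd⟩ := ih
    obtain ⟨e, hde, he⟩ := (h.of_reach hG hcd).exists_reach_sReach_add_betaS hG s
    refine ⟨e, hcd.trans hde, ?_⟩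
    rw [succ_nsmul, ← add_assoc]
    exact (hd.add_right _).trans he

/-- The configurations that can be dominated by firing sufficiently many chips placed on `s`. They
form a submonoid, so that covering every configuration reduces to covering single chips. -/
def coverable (src tgt : E → V) (s : V) : AddSubmonoid (V → ℕ) where
  carrier := {y | ∃ (k : ℕ) (x : V → ℕ), Reach src tgt (k • deltaS s) x ∧ y ≤ x}
  zero_mem' := ⟨0, _, .refl, zero_le⟩
  add_mem' := by
    rintro y y' ⟨k, x, hx, hyx⟩ ⟨k', x', hx', hyx'⟩
    exact ⟨k + k', x + x', add_nsmul (deltaS s) k k' ▸ hx.add hx', add_le_add hyx hyx'⟩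

lemma single_tgt_mem_coverable {e : E} (h : Pi.single (src e) 1 ∈ coverable src tgt s) :
    Pi.single (tgt e) 1 ∈ coverable src tgt s := by
  obtain ⟨k, x, hx, hle⟩ := nsmul_mem h (outdeg src (src e))
  have hlegal : outdeg src (src e) ≤ x (src e) := by simpa using hle (src e)
  have hpos := (numEdges_pos (tgt := tgt) e).trans_le (numEdges_le_fire hlegal (tgt e))
  exact ⟨k, _, hx.tail ⟨src e, hlegal, rfl⟩, update_le_iff.2 ⟨hpos, fun _ _ => zero_le⟩⟩

lemma single_mem_coverable (hG : StronglyConnected src tgt) (s v : V) :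
    Pi.single v 1 ∈ coverable src tgt s := by
  induction hG s v with
  | refl =>
    exact ⟨1, _, .refl, update_le_iff.2 ⟨by simp [deltaS], fun _ _ => zero_le⟩⟩
  | tail _ hedge ih =>
    obtain ⟨e, rfl, rfl⟩ := hedge
    exact single_tgt_mem_coverable ih

end

lemma exists_normalForm_or_cycle {α : Type*} {R : α → α → Prop} {a : α}
    (hfin : {b | Relation.ReflTransGen R a b}.Finite) :
    ∃ b, Relation.ReflTransGen R a b ∧ ((∀ b', ¬ R b b') ∨ Relation.TransGen R b b) := by
  by_contra! hcon
  let S := {b | Relation.ReflTransGen R a b}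
  have : Finite S := hfin
  let r : S → S → Prop := fun x y => Relation.TransGen R y x
  have : IsTrans S r := ⟨fun _ _ _ hxy hyz => hyz.trans hxy⟩
  have : Std.Irrefl r := ⟨fun x => (hcon x x.2).2⟩
  obtain ⟨m, -, hmin⟩ := (Finite.wellFounded_of_trans_of_irrefl r).has_min Set.univ
    ⟨⟨a, .refl⟩, trivial⟩
  obtain ⟨b, hb⟩ := (hcon m m.2).1
  exact hmin ⟨b, m.2.tail hb⟩ trivial (.single hb)

section

omit [DecidableEq E]

variable {src tgt : E → V} {s : V}

lemma sum_numEdges (src tgt : E → V) (v : V) : ∑ w, numEdges src tgt v w = outdeg src v := by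
  simp only [numEdges, outdeg, ← Finset.filter_filter]
  exact (Finset.card_eq_sum_card_fiberwise fun _ _ => Finset.mem_univ _).symm

lemma lvl_fire {c : V → ℕ} {v : V} (hv : outdeg src v ≤ c v) :
    lvl (fire src tgt c v) = lvl c := by
  have hsum := Finset.sum_congr rfl fun w (_ : w ∈ Finset.univ) =>
    fire_apply_add (tgt := tgt) hv w
  simp only [Finset.sum_add_distrib, sum_numEdges, Finset.sum_ite_eq', Finset.mem_univ,
    if_true] at hsum
  exact Nat.add_right_cancel hsum

lemma Reach.lvl_eq {c d : V → ℕ} (h : Reach src tgt c d) : lvl d = lvl c := by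
  induction h with
  | refl => rfl
  | tail _ hstep ih =>
    obtain ⟨v, hv, rfl⟩ := hstep
    rw [lvl_fire hv, ih]

omit [DecidableEq V] in
lemma apply_le_lvl (c : V → ℕ) (v : V) : c v ≤ lvl c :=
  Finset.single_le_sum (f := c) (fun _ _ => zero_le) (Finset.mem_univ v)

lemma Stable.lvl_lt [Nonempty V] {c : V → ℕ} (hc : Stable src c) : lvl c < lvl (outdeg src) :=
  Finset.sum_lt_sum_of_nonempty Finset.univ_nonempty fun v _ => hc v

lemma lvl_eq_add_sum_restrictS (s : V) (c : V → ℕ) : lvl c = c s + ∑ v, restrictS s c v := by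
  rw [lvl, ← Finset.add_sum_erase Finset.univ c (Finset.mem_univ s)]
  exact congrArg _ (Finset.sum_subtype _ (by simp) c)

omit [DecidableEq V] in
lemma eq_of_restrictS_eq_of_lvl_eq {c d : V → ℕ} (h : restrictS s c = restrictS s d)
    (hlvl : lvl c = lvl d) : c = d := by
  classical
  rw [lvl_eq_add_sum_restrictS s c, lvl_eq_add_sum_restrictS s d, h,
    Nat.add_right_cancel_iff] at hlvl
  rw [← extendS_restrictS_add s c, ← extendS_restrictS_add s d, h, hlvl]

lemma lvl_extendS_add (a : {v : V // v ≠ s} → ℕ) (k : ℕ) :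
    lvl (extendS s a + k • deltaS s) = k + ∑ v, a v := by
  rw [lvl_eq_add_sum_restrictS s, restrictS_extendS_add]
  simp [extendS, deltaS]

lemma lvl_phi (a : {v : V // v ≠ s} → ℕ) : lvl (phi src tgt s a) = slvl src tgt s a :=
  lvl_extendS_add a _

lemma Recurrent.slvl_restrictS_le {c : V → ℕ} (hc : Recurrent src tgt c) (s : V) :
    slvl src tgt s (restrictS s c) ≤ lvl c := by
  rw [lvl_eq_add_sum_restrictS s c]
  refine Nat.add_le_add_right (Nat.sInf_le ?_) _
  rwa [Set.mem_ofPred_eq, extendS_restrictS_add]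

end

section

omit [Fintype V] [DecidableEq E]

variable [Finite V]

variable {src tgt : E → V} {s : V}

lemma finite_setOf_reach (src tgt : E → V) (c : V → ℕ) : {d | Reach src tgt c d}.Finite := by
  cases nonempty_fintype V
  exact (Set.finite_Icc (0 : V → ℕ) fun _ => lvl c).subset fun d hd =>
    ⟨zero_le, fun v => (apply_le_lvl d v).trans_eq hd.lvl_eq⟩

theorem exists_recurrent [Nonempty V] (hG : StronglyConnected src tgt) :
    ∃ c, Recurrent src tgt c := by
  cases nonempty_fintype V
  obtain ⟨c, hc, hnormal | hcycle⟩ :=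
    exists_normalForm_or_cycle (finite_setOf_reach src tgt (outdeg src))
  · have hstable : Stable src c := fun v => not_le.1 fun hv => hnormal _ ⟨v, hv, rfl⟩
    exact absurd (Reach.lvl_eq hc) hstable.lvl_lt.ne
  · exact ⟨c, (recurrent_iff_isPeriodic hG).2 (isPeriodic_of_transGen hcycle)⟩

lemma finite_setOf_sReach (src tgt : E → V) (a : {v : V // v ≠ s} → ℕ) :
    {b | SReach src tgt s a b}.Finite := by
  refine ((finite_setOf_reach src tgt (extendS s a)).image (restrictS s)).subset fun b hb => ?_
  rw [← restrictS_extendS a] at hb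
  exact hb.exists_reach

lemma not_transGen_sFireStep_self (hG : StronglyConnected src tgt) (a : {v : V // v ≠ s} → ℕ) :
    ¬ Relation.TransGen (SFireStep src tgt s) a a := by
  cases nonempty_fintype V
  intro hcycle
  rw [← restrictS_extendS a] at hcycle
  obtain ⟨l, d, hl, hlegal, hs, hd⟩ := exists_legalSeq_of_transGen_sFireStep hcycle
  obtain rfl := eq_of_restrictS_eq_of_lvl_eq hd hlegal.reach.lvl_eq
  exact hs (hlegal.mem_of_ne_nil hG hl s)

theorem exists_sReach_sStable (hG : StronglyConnected src tgt) (a : {v : V // v ≠ s} → ℕ) :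
    ∃ b, SReach src tgt s a b ∧ SStable src s b := by
  obtain ⟨b, hab, hnormal | hcycle⟩ := exists_normalForm_or_cycle (finite_setOf_sReach src tgt a)
  · exact ⟨b, hab, fun v => not_le.1 fun hv => hnormal _ ⟨v, hv, rfl⟩⟩
  · exact absurd hcycle (not_transGen_sFireStep_self hG b)

lemma sReach_stab (hG : StronglyConnected src tgt) (a : {v : V // v ≠ s} → ℕ) :
    SReach src tgt s a (stab src tgt s a) :=
  (Classical.epsilon_spec (exists_sReach_sStable hG a)).1

lemma sStable_stab (hG : StronglyConnected src tgt) (a : {v : V // v ≠ s} → ℕ) :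
    SStable src s (stab src tgt s a) :=
  (Classical.epsilon_spec (exists_sReach_sStable hG a)).2

lemma SReach.stab_eq (hG : StronglyConnected src tgt) {a b : {v : V // v ≠ s} → ℕ}
    (h : SReach src tgt s a b) : stab src tgt s a = stab src tgt s b :=
  (sReach_stab hG a).eq_of_sStable (sStable_stab hG a) (h.trans (sReach_stab hG b))
    (sStable_stab hG b)

lemma SStable.stab_eq_self (hG : StronglyConnected src tgt) {a : {v : V // v ≠ s} → ℕ}
    (ha : SStable src s a) : stab src tgt s a = a :=
  ha.eq_of_sReach (sReach_stab hG a)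

lemma stab_stab_add (hG : StronglyConnected src tgt) (a b : {v : V // v ≠ s} → ℕ) :
    stab src tgt s (stab src tgt s a + b) = stab src tgt s (a + b) :=
  (((sReach_stab hG a).add_right b).stab_eq hG).symm

lemma SRecurrent.stab_eq_self (hG : StronglyConnected src tgt) {a : {v : V // v ≠ s} → ℕ}
    (ha : SRecurrent src tgt s a) : stab src tgt s a = a := by
  obtain ⟨b, rfl⟩ := ha 0
  exact (sStable_stab hG _).stab_eq_self hG

lemma exists_reach_restrictS_eq_stab (hG : StronglyConnected src tgt) (s : V) (c : V → ℕ) :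
    ∃ d, Reach src tgt c d ∧ restrictS s d = stab src tgt s (restrictS s c) :=
  (sReach_stab hG _).exists_reach

lemma Recurrent.exists_reach_restrictS_eq_stab_add (hG : StronglyConnected src tgt) {c : V → ℕ}
    (hc : Recurrent src tgt c) (s : V) (k : ℕ) :
    ∃ d, Reach src tgt c d ∧
      restrictS s d = stab src tgt s (restrictS s c + k • betaS src tgt s) := by
  obtain ⟨d, hcd, hd⟩ := hc.exists_reach_sReach_add_nsmul_betaS hG s k
  obtain ⟨e, hde, he⟩ := exists_reach_restrictS_eq_stab hG s d
  exact ⟨e, hcd.trans hde, by rw [he, hd.stab_eq hG]⟩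

lemma Reach.sEquiv_stab (hG : StronglyConnected src tgt) {c d : V → ℕ}
    (h : Reach src tgt c d) (s : V) :
    SEquiv src tgt s (stab src tgt s (restrictS s c)) (stab src tgt s (restrictS s d)) := by
  obtain ⟨k, hk⟩ := h.sReach s
  exact ⟨k, by rw [stab_stab_add hG, hk.stab_eq hG]⟩

lemma coverable_eq_top (hG : StronglyConnected src tgt) (s : V) : coverable src tgt s = ⊤ := by
  cases nonempty_fintype V
  refine (AddSubmonoid.eq_top_iff' _).2 fun y => ?_
  rw [← Finset.univ_sum_single y]
  refine sum_mem fun v _ => ?_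
  simpa [← Pi.single_smul] using nsmul_mem (single_mem_coverable hG s v) (y v)

lemma exists_sReach_nsmul_betaS_ge (hG : StronglyConnected src tgt) (y : {v : V // v ≠ s} → ℕ) :
    ∃ (k : ℕ) (x : {v : V // v ≠ s} → ℕ), SReach src tgt s (k • betaS src tgt s) x ∧ y ≤ x := by
  have hy : extendS s y ∈ coverable src tgt s := coverable_eq_top hG s ▸ AddSubmonoid.mem_top _
  obtain ⟨_, x, hx, hyx⟩ := hy
  obtain ⟨k, hk⟩ := hx.sReach s
  rw [restrictS_nsmul_deltaS, zero_add] at hk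
  exact ⟨k, restrictS s x, hk, (restrictS_extendS y).ge.trans fun v => hyx v⟩

theorem Recurrent.sRecurrent_stab (hG : StronglyConnected src tgt) {c : V → ℕ}
    (hc : Recurrent src tgt c) (s : V) :
    SRecurrent src tgt s (stab src tgt s (restrictS s c)) := by
  intro y
  set β := betaS src tgt s
  obtain ⟨k, x, hx, hyx⟩ := exists_sReach_nsmul_betaS_ge hG y
  obtain ⟨d, hcd, hd⟩ := hc.exists_reach_sReach_add_nsmul_betaS hG s k
  obtain ⟨m, hm⟩ := (hc.2 d hcd).sReach s
  refine ⟨x - y + (restrictS s c + m • β), ?_⟩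
  calc stab src tgt s (y + (x - y + (restrictS s c + m • β)))
      = stab src tgt s (x + (restrictS s c + m • β)) := by
        rw [← add_assoc, add_tsub_cancel_of_le hyx]
    _ = stab src tgt s (k • β + (restrictS s c + m • β)) := ((hx.add_right _).stab_eq hG).symm
    _ = stab src tgt s (restrictS s c + k • β + m • β) := by rw [add_left_comm, add_assoc]
    _ = stab src tgt s (restrictS s c) := SReach.stab_eq hG ((hd.add_right _).trans hm)

lemma SRecurrent.exists_recurrent_restrictS_eq (hG : StronglyConnected src tgt)
    {a : {v : V // v ≠ s} → ℕ} (ha : SRecurrent src tgt s a) :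
    ∃ c, Recurrent src tgt c ∧ restrictS s c = a := by
  have : Nonempty V := ⟨s⟩
  obtain ⟨c, hc⟩ := exists_recurrent hG
  obtain ⟨b, rfl⟩ := ha (restrictS s c)
  obtain ⟨d, hcd, hd⟩ := exists_reach_restrictS_eq_stab hG s (c + extendS s b)
  refine ⟨d, (hc.add_right hG _).of_reach hG hcd, ?_⟩
  rw [hd, restrictS_add, restrictS_extendS]

lemma SRecurrent.recurrent_phi (hG : StronglyConnected src tgt) {a : {v : V // v ≠ s} → ℕ}
    (ha : SRecurrent src tgt s a) : Recurrent src tgt (phi src tgt s a) := by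
  obtain ⟨c, hc, rfl⟩ := ha.exists_recurrent_restrictS_eq hG
  exact Nat.sInf_mem (s := {k : ℕ | Recurrent src tgt (extendS s (restrictS s c) + k • deltaS s)})
    ⟨c s, by rwa [Set.mem_ofPred_eq, extendS_restrictS_add]⟩

lemma SEquiv.symm (hG : StronglyConnected src tgt) {a b : {v : V // v ≠ s} → ℕ}
    (h : SEquiv src tgt s a b) (ha : SRecurrent src tgt s a) (hb : SRecurrent src tgt s b) :
    SEquiv src tgt s b a := by
  have hphi := ha.recurrent_phi hG
  obtain ⟨k, rfl⟩ := h
  obtain ⟨d, hd, hda⟩ := hphi.exists_reach_restrictS_eq_stab_add hG s k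
  have hback := (hphi.2 d hd).sEquiv_stab hG s
  rwa [hda, restrictS_phi, hb.stab_eq_self hG, ha.stab_eq_self hG] at hback

lemma SEquiv.trans (hG : StronglyConnected src tgt) {a b c : {v : V // v ≠ s} → ℕ}
    (hab : SEquiv src tgt s a b) (hbc : SEquiv src tgt s b c) : SEquiv src tgt s a c := by
  obtain ⟨k, rfl⟩ := hab
  obtain ⟨m, rfl⟩ := hbc
  exact ⟨k + m, by rw [stab_stab_add hG, add_nsmul, add_assoc]⟩

lemma equivalence_sEquiv (hG : StronglyConnected src tgt) (s : V) :
    Equivalence fun a b : RecS src tgt s => SEquiv src tgt s a b where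
  refl a := ⟨0, by simpa using a.2.stab_eq_self hG⟩
  symm {a b} hab := hab.symm hG a.2 b.2
  trans := .trans hG

lemma recSSetoid_r_iff (hG : StronglyConnected src tgt) {a b : RecS src tgt s} :
    (recSSetoid src tgt s).r a b ↔ SEquiv src tgt s a b :=
  (equivalence_sEquiv hG s).eqvGen_iff

end

section

omit [DecidableEq E]

variable {src tgt : E → V} {s : V}

theorem Recurrent.reach_of_sEquiv_stab (hG : StronglyConnected src tgt) {c d : V → ℕ}
    (hc : Recurrent src tgt c) (hd : Recurrent src tgt d) (hlvl : lvl c = lvl d)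
    (h : SEquiv src tgt s (stab src tgt s (restrictS s c)) (stab src tgt s (restrictS s d))) :
    Reach src tgt c d := by
  obtain ⟨k, hk⟩ := h
  rw [stab_stab_add hG] at hk
  obtain ⟨c', hcc', hc'⟩ := hc.exists_reach_restrictS_eq_stab_add hG s k
  obtain ⟨d', hdd', hd'⟩ := exists_reach_restrictS_eq_stab hG s d
  obtain rfl : c' = d' := eq_of_restrictS_eq_of_lvl_eq (by rw [hc', hk, hd'])
    (by rw [hcc'.lvl_eq, hlvl, hdd'.lvl_eq])
  exact hcc'.trans (hd.2 c' hdd')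

theorem SRecurrent.exists_recurrent_lvl_eq (hG : StronglyConnected src tgt)
    {a : {v : V // v ≠ s} → ℕ} (ha : SRecurrent src tgt s a) {n : ℕ}
    (hn : slvl src tgt s a ≤ n) :
    ∃ c, Recurrent src tgt c ∧ restrictS s c = a ∧ lvl c = n := by
  obtain ⟨m, rfl⟩ := Nat.exists_eq_add_of_le hn
  refine ⟨phi src tgt s a + m • deltaS s, (ha.recurrent_phi hG).add_right hG _, ?_, ?_⟩
  · rw [restrictS_add, restrictS_phi, restrictS_nsmul_deltaS, add_zero]
  · rw [phi, add_assoc, ← add_smul, lvl_extendS_add, slvl]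
    omega

theorem Recurrent.slvl_stab_le (hG : StronglyConnected src tgt) {c : V → ℕ}
    (hc : Recurrent src tgt c) (s : V) :
    slvl src tgt s (stab src tgt s (restrictS s c)) ≤ lvl c := by
  obtain ⟨d, hcd, hd⟩ := exists_reach_restrictS_eq_stab hG s c
  rw [← hd, ← hcd.lvl_eq]
  exact (hc.of_reach hG hcd).slvl_restrictS_le s

lemma SRecurrent.slvl_le_of_sEquiv (hG : StronglyConnected src tgt)
    {a b : {v : V // v ≠ s} → ℕ} (ha : SRecurrent src tgt s a) (hab : SEquiv src tgt s a b) :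
    slvl src tgt s b ≤ slvl src tgt s a := by
  obtain ⟨k, rfl⟩ := hab
  obtain ⟨d, hd, hda⟩ := (ha.recurrent_phi hG).exists_reach_restrictS_eq_stab_add hG s k
  rw [restrictS_phi] at hda
  rw [← hda, ← lvl_phi a, ← hd.lvl_eq]
  exact ((ha.recurrent_phi hG).of_reach hG hd).slvl_restrictS_le s

lemma slvlClass_mk (hG : StronglyConnected src tgt) (a : RecS src tgt s) :
    slvlClass src tgt s (Quotient.mk (recSSetoid src tgt s) a) = slvl src tgt s a := by
  refine IsGreatest.csSup_eq ⟨⟨a, rfl, rfl⟩, ?_⟩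
  rintro _ ⟨b, hb, rfl⟩
  exact a.2.slvl_le_of_sEquiv hG ((recSSetoid_r_iff hG).1 (Quotient.exact hb.symm))

end

/-- The map `Φ̃` sending the `~`-class of a recurrent configuration `c`
to the `~_s`-class of the stabilization of its restriction is well defined, and for
every `n` it restricts to a bijection from `Rec_n(G,~)` onto
`{[d̂] ∈ Rec(G,s)/~_s : slvl([d̂]) ≤ n}`. -/
theorem phiTilde_bijection [Nonempty V] (src tgt : E → V)
    (hG : StronglyConnected src tgt) (s : V) :
    ∃ hrec : ∀ c : V → ℕ, Recurrent src tgt c →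
        SRecurrent src tgt s (stab src tgt s (restrictS s c)),
      (∀ c d : RecL src tgt, (recLSetoid src tgt).r c d →
        (recSSetoid src tgt s).r
          ⟨stab src tgt s (restrictS s c.1), hrec c.1 c.2⟩
          ⟨stab src tgt s (restrictS s d.1), hrec d.1 d.2⟩) ∧
      ∀ n : ℕ,
        (∀ c : RecL src tgt, lvl c.1 = n →
          slvlClass src tgt s (Quotient.mk (recSSetoid src tgt s)
            ⟨stab src tgt s (restrictS s c.1), hrec c.1 c.2⟩) ≤ n) ∧
        (∀ c d : RecL src tgt, lvl c.1 = n → lvl d.1 = n →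
          Quotient.mk (recSSetoid src tgt s)
              ⟨stab src tgt s (restrictS s c.1), hrec c.1 c.2⟩ =
            Quotient.mk (recSSetoid src tgt s)
              ⟨stab src tgt s (restrictS s d.1), hrec d.1 d.2⟩ →
          Quotient.mk (recLSetoid src tgt) c = Quotient.mk (recLSetoid src tgt) d) ∧
        (∀ q : RecSQuot src tgt s, slvlClass src tgt s q ≤ n →
          ∃ c : RecL src tgt, lvl c.1 = n ∧
            Quotient.mk (recSSetoid src tgt s)
              ⟨stab src tgt s (restrictS s c.1), hrec c.1 c.2⟩ = q) := by
  refine ⟨fun c hc => hc.sRecurrent_stab hG s, fun c d hcd => ?_, fun n => ⟨?_, ?_, ?_⟩⟩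
  · exact (recSSetoid_r_iff hG).2 ((recLSetoid_r_iff.1 hcd).sEquiv_stab hG s)
  · rintro c rfl
    rw [slvlClass_mk hG]
    exact c.2.slvl_stab_le hG s
  · rintro c d rfl hlvl hcd
    refine Quotient.sound (recLSetoid_r_iff.2 ?_)
    exact c.2.reach_of_sEquiv_stab hG d.2 hlvl.symm ((recSSetoid_r_iff hG).1 (Quotient.exact hcd))
  · rintro ⟨a⟩ ha
    obtain ⟨c, hc, hca, hlvl⟩ := a.2.exists_recurrent_lvl_eq hG ((slvlClass_mk hG a).ge.trans ha)
    refine ⟨⟨c, hc⟩, hlvl, congrArg _ (Subtype.ext ?_)⟩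
    exact (congrArg _ hca).trans (a.2.stab_eq_self hG)

end SandpileBM
end

section
/- (Burning test for the sinkless sandpile model.) A chip configuration c is recurrent if and only if there exists a finite sequence of legal firing moves leading from c back to c in which every vertex v ∈ V is fired exactly r(v) times, where r is the primitive period vector of G. -/
open Finset Polynomial

namespace SandpileBM

variable {V E : Type} [Fintype V] [DecidableEq V] [Fintype E] [DecidableEq E]

/-!
Firing a list `p` of vertices, legally or not, changes a configuration by `-Δ` applied to the
numbers of firings in `p`, so the order of the moves is irrelevant to the outcome. The exchange
lemma `LegalSeq.diff` says that if `l` is legal from `c` to `d` and contains `p`, then firing `p`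
first costs nothing: what remains of `l` is legal from the result to `d`.

If `c` is recurrent, it lies on a nonempty closed legal sequence `l`, whose firing vector is in the
kernel of `Δ` and hence equal to `k • r` with `k ≥ 1`. Exchanging away `p` with firing vector
`(k - 1) • r`, which does not move `c`, leaves a closed legal sequence with firing vector `r`.

Conversely, let `l` be a closed legal sequence at `c` firing every vertex. If `p` leads from `c` to
`d`, then enough repetitions of `l` contain `p`, and exchanging `p` away leads from `d` back to `c`.
-/

open scoped Matrix List

section Laplacian

omit [DecidableEq E]

variable {src tgt : E → V}

omit [Fintype V] in
theorem lapMatrix_apply (v w : V) :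
    lapMatrix src tgt v w = (if v = w then (outdeg src v : ℤ) else 0) - numEdges src tgt w v := by
  rw [lapMatrix, Matrix.of_apply]
  split_ifs with h
  · rw [h]
  · rw [zero_sub]

theorem lapMatrix_mulVec (q : V → ℤ) : lapMatrix src tgt *ᵥ q = lapApply src tgt q := by
  ext v
  simp [Matrix.mulVec, dotProduct, lapApply, lapMatrix_apply, sub_mul]

theorem lapMatrix_mulVec_apply_nonpos {q : V → ℤ} {v : V} (hq : 0 ≤ q) (hv : q v = 0) :
    (lapMatrix src tgt *ᵥ q) v ≤ 0 := by
  rw [lapMatrix_mulVec, lapApply, hv, mul_zero, zero_sub, neg_nonpos]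
  exact sum_nonneg fun w _ => mul_nonneg (Nat.cast_nonneg _) (hq w)

theorem IsPeriodVector.lapMatrix_mulVec_eq_zero {r : V → ℕ} (hr : IsPeriodVector src tgt r) :
    lapMatrix src tgt *ᵥ (fun v => (r v : ℤ)) = 0 := by
  rw [lapMatrix_mulVec]
  exact hr.2.2.1

theorem IsPeriodVector.exists_eq_mul {r q : V → ℕ} (hr : IsPeriodVector src tgt r)
    (hq : lapMatrix src tgt *ᵥ (fun v => (q v : ℤ)) = 0) : ∃ k : ℕ, ∀ v, q v = k * r v := by
  obtain ⟨hpos, -, -, hgen⟩ := hr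
  obtain ⟨k, hk⟩ := hgen _ (lapMatrix_mulVec (src := src) (tgt := tgt) _ ▸ hq)
  have hqk (v : V) : (q v : ℤ) = k * r v := by simpa using congrFun hk v
  refine ⟨k.toNat, fun v => ?_⟩
  have hk0 : 0 ≤ k :=
    nonneg_of_mul_nonneg_left (hqk v ▸ Nat.cast_nonneg _) (Nat.cast_pos.2 (hpos v))
  zify
  rw [Int.toNat_of_nonneg hk0, hqk]

end Laplacian

section FiringVector

omit [Fintype V]

/-- The firing vector (or score) of a sequence of firing moves: how often each vertex is fired.
It is integer-valued so that the Laplacian can act on it. -/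
def firingVector (l : List V) : V → ℤ := fun v => l.count v

@[simp]
theorem firingVector_nil : firingVector ([] : List V) = 0 := by
  ext v
  simp [firingVector]

theorem firingVector_cons (a : V) (l : List V) :
    firingVector (a :: l) = Pi.single a 1 + firingVector l := by
  ext v
  by_cases h : v = a
  · simp [firingVector, h, add_comm]
  · simp [firingVector, h, List.count_cons_of_ne (Ne.symm h)]

theorem firingVector_eq_single_add_erase {a : V} {l : List V} (ha : a ∈ l) :
    firingVector l = Pi.single a 1 + firingVector (l.erase a) := by
  rw [← firingVector_cons]
  ext v
  exact congrArg Nat.cast ((List.perm_cons_erase ha).count_eq v)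

theorem exists_list_count_eq [Finite V] (m : V → ℕ) : ∃ l : List V, ∀ v, l.count v = m v := by
  refine ⟨(Finsupp.equivFunOnFinite.symm m).toMultiset.toList, fun v => ?_⟩
  rw [← Multiset.coe_count, Multiset.coe_toList, Finsupp.count_toMultiset,
    Finsupp.equivFunOnFinite_symm_apply_apply]

end FiringVector

section LegalSeq

omit [DecidableEq E] [Fintype V]

variable {src tgt : E → V} {c d e : V → ℕ}

theorem LegalSeq.append {l₁ l₂ : List V} (h₁ : LegalSeq src tgt l₁ c d)
    (h₂ : LegalSeq src tgt l₂ d e) : LegalSeq src tgt (l₁ ++ l₂) c e := by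
  induction l₁ generalizing c with
  | nil => cases h₁; exact h₂
  | cons a l ih => exact ⟨h₁.1, ih h₁.2⟩

theorem LegalSeq.flatten_replicate {l : List V} (h : LegalSeq src tgt l c c) (n : ℕ) :
    LegalSeq src tgt (List.replicate n l).flatten c c := by
  induction n with
  | zero => rfl
  | succ n ih => exact h.append ih

theorem reach_iff_exists_legalSeq : Reach src tgt c d ↔ ∃ l, LegalSeq src tgt l c d := by
  constructor
  · intro h
    induction h using Relation.ReflTransGen.head_induction_on with
    | refl => exact ⟨[], rfl⟩
    | head hstep _ ih =>
      obtain ⟨v, hv, rfl⟩ := hstep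
      obtain ⟨l, hl⟩ := ih
      exact ⟨v :: l, hv, hl⟩
  · rintro ⟨l, hl⟩
    induction l generalizing c with
    | nil => cases hl; exact .refl
    | cons v l ih => exact .head ⟨v, hl.1, rfl⟩ (ih hl.2)

theorem cast_fire {a : V} (ha : outdeg src a ≤ c a) (v : V) :
    (fire src tgt c a v : ℤ) = c v - lapMatrix src tgt v a := by
  rw [fire, lapMatrix_apply]
  split_ifs with h
  · subst h; omega
  · omega

end LegalSeq

section Exchange

omit [DecidableEq E]

variable {src tgt : E → V} {c c' d : V → ℕ} {l p : List V}

theorem LegalSeq.cast_eq_sub_mulVec (h : LegalSeq src tgt l c d) (v : V) :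
    (d v : ℤ) = c v - (lapMatrix src tgt *ᵥ firingVector l) v := by
  induction l generalizing c with
  | nil => cases h; simp
  | cons a l ih =>
    rw [ih h.2, cast_fire h.1, firingVector_cons, Matrix.mulVec_add, Matrix.mulVec_single_one]
    simp only [Pi.add_apply, Matrix.col_apply]
    ring

theorem LegalSeq.lapMatrix_mulVec_firingVector_eq_zero (h : LegalSeq src tgt l c c) :
    lapMatrix src tgt *ᵥ firingVector l = 0 := by
  ext v
  have := h.cast_eq_sub_mulVec v
  rw [Pi.zero_apply]
  lia

-- A vertex `a ∉ p` only gains chips when `p` is fired in advance, so the moves of `l` outside `p`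
-- stay legal; the moves in `p` are skipped, having been paid for by passing from `c` to `c'`.
theorem LegalSeq.diff (h : LegalSeq src tgt l c d) (hp : p <+~ l)
    (hc' : ∀ v, (c' v : ℤ) = c v - (lapMatrix src tgt *ᵥ firingVector p) v) :
    LegalSeq src tgt (l.diff p) c' d := by
  induction l generalizing c c' p with
  | nil =>
    obtain rfl : p = [] := List.subperm_nil.1 hp
    obtain rfl : d = c := h
    funext v
    simpa using (hc' v).symm
  | cons a l ih =>
    obtain ⟨ha, hl⟩ := h
    rw [List.cons_diff]
    split_ifs with hap
    · refine ih hl (by simpa using hp.erase a) fun v => ?_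
      rw [hc', firingVector_eq_single_add_erase hap, cast_fire ha, Matrix.mulVec_add,
        Matrix.mulVec_single_one]
      simp only [Pi.add_apply, Matrix.col_apply]
      ring
    · have ha' : outdeg src a ≤ c' a := by
        have hloss : (lapMatrix src tgt *ᵥ firingVector p) a ≤ 0 :=
          lapMatrix_mulVec_apply_nonpos (fun _ => Nat.cast_nonneg _)
            (by simp [firingVector, List.count_eq_zero_of_not_mem hap])
        have := hc' a
        omega
      refine ⟨ha', ih hl ?_ fun v => ?_⟩
      · simpa [List.erase_of_not_mem hap] using hp.erase a
      · rw [cast_fire ha', cast_fire ha, hc']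
        ring

end Exchange

section BurningTest

omit [DecidableEq E]

variable {src tgt : E → V} {r c : V → ℕ}

omit [Fintype V] in
theorem Recurrent.exists_legalSeq_self (h : Recurrent src tgt c) :
    ∃ l ≠ [], LegalSeq src tgt l c c := by
  obtain ⟨hunstable, hback⟩ := h
  obtain ⟨v, hv⟩ : ∃ v, outdeg src v ≤ c v := by simpa [Stable] using hunstable
  obtain ⟨l, hl⟩ := reach_iff_exists_legalSeq.1 (hback _ (.single ⟨v, hv, rfl⟩))
  exact ⟨v :: l, List.cons_ne_nil v l, hv, hl⟩

theorem IsPeriodVector.exists_legalSeq_count_eq (hr : IsPeriodVector src tgt r) {l : List V}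
    (hne : l ≠ []) (hl : LegalSeq src tgt l c c) :
    ∃ l', LegalSeq src tgt l' c c ∧ ∀ v, l'.count v = r v := by
  obtain ⟨k, hcount⟩ : ∃ k, ∀ v, l.count v = k * r v :=
    hr.exists_eq_mul hl.lapMatrix_mulVec_firingVector_eq_zero
  obtain ⟨a, ha⟩ := List.exists_mem_of_ne_nil l hne
  have hk0 : k ≠ 0 := by
    rintro rfl
    exact (List.count_pos_iff.2 ha).ne' (by rw [hcount, zero_mul])
  obtain ⟨j, rfl⟩ := Nat.exists_eq_add_one_of_ne_zero hk0
  obtain ⟨p, hp⟩ := exists_list_count_eq fun v => j * r v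
  have hpl : p <+~ l := List.subperm_ext_iff.2 fun v _ => by
    rw [hp, hcount]
    exact Nat.mul_le_mul_right _ j.le_succ
  have hker : lapMatrix src tgt *ᵥ firingVector p = 0 := by
    have hpr : firingVector p = (j : ℤ) • fun v => (r v : ℤ) := by
      ext v
      simp [firingVector, hp]
    rw [hpr, Matrix.mulVec_smul, hr.lapMatrix_mulVec_eq_zero, smul_zero]
  refine ⟨l.diff p, hl.diff hpl fun v => by simp [hker], fun v => ?_⟩
  rw [List.count_diff, hcount, hp, ← Nat.sub_mul, Nat.add_sub_cancel_left, Nat.one_mul]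

omit [Fintype V] in
theorem recurrent_of_legalSeq_self [Nonempty V] {l : List V} (hmem : ∀ v, v ∈ l)
    (hl : LegalSeq src tgt l c c) : Recurrent src tgt c := by
  refine ⟨fun hstable => ?_, fun d hd => ?_⟩
  · cases l with
    | nil => exact List.not_mem_nil (hmem (Classical.arbitrary V))
    | cons a l => exact (hstable a).not_ge hl.1
  · let : Fintype V := .ofList l hmem
    obtain ⟨p, hp⟩ := reach_iff_exists_legalSeq.1 hd
    have hsub : p <+~ (List.replicate p.length l).flatten :=
      List.subperm_ext_iff.2 fun v _ => calc
        p.count v ≤ p.length := List.count_le_length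
        _ ≤ p.length * l.count v := Nat.le_mul_of_pos_right _ (List.count_pos_iff.2 (hmem v))
        _ = (List.replicate p.length l).flatten.count v := by simp [List.count_flatten]
    exact reach_iff_exists_legalSeq.2 ⟨_, (hl.flatten_replicate _).diff hsub hp.cast_eq_sub_mulVec⟩

end BurningTest

/-- Burning test for the sinkless sandpile model. A chip configuration
`c` is recurrent iff there is a finite sequence of legal firing moves from `c` back to
`c` in which every vertex `v` is fired exactly `r(v)` times, `r` being the primitive
period vector. -/
theorem burning_test_sinkless [Nonempty V] (src tgt : E → V)
    (hG : StronglyConnected src tgt) (r : V → ℕ) (hr : IsPeriodVector src tgt r)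
    (c : V → ℕ) :
    Recurrent src tgt c ↔
      ∃ l : List V, LegalSeq src tgt l c c ∧ ∀ v : V, l.count v = r v := by
  constructor
  · intro hc
    obtain ⟨l, hne, hl⟩ := hc.exists_legalSeq_self
    exact hr.exists_legalSeq_count_eq hne hl
  · rintro ⟨l, hl, hcount⟩
    have hmem (v : V) : v ∈ l := List.count_pos_iff.1 (hcount v ▸ hr.1 v)
    exact recurrent_of_legalSeq_self hmem hl

end SandpileBM
end
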